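/- arXiv:1702.03981 — 2 statements merged into one kernel-verified Lean document; each statement's English description precedes it below -/
import Mathlib

section
/- Relative Completeness of the Approximate Automata: Let ρ : q_𝒜 →^{σ⃗_{1..m}} q_m be a run of the full automaton 𝒜(ω)^{(P,ν)}_{(τ,τ')} and let k be the number of occurrences of σ⃗_{i+1} in the sequence σ⃗_{(i+1)..m}, where i is the least index with q_{i+1} = ⊤ (taking k = 0 when no such i exists). Then for each n ≥ k, ρ' : q_𝒜 →^{σ⃗_{1..m}} q'_m is a run of 𝒜(n)^{(P,ν)}_{(τ,τ')}, where q'_j = q_j if j ≤ i (or j ≤ m if no such i exists) and otherwise q'_j = ⊤^{k'}_{σ⃗_{i+1}} with k' the number of occurrences of σ⃗_{i+1} in σ⃗_{(i+1)..j}; moreover V(ρ) = V(ρ'). -/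
noncomputable section

/-- We work with ordinals in universe 0. -/
abbrev Ordl : Type 1 := Ordinal.{0}

/-- Reverse ordinal sum: `revSum d k = d (k-1) + ⋯ + d 0` (and `0` for `k = 0`). -/
def revSum (d : ℕ → Ordl) : ℕ → Ordl
  | 0 => 0
  | k + 1 => d k + revSum d k

/-- An abstract entailment system: antecedents, consequents, models, the two
satisfaction relations, and finite sets of trace values for antecedents and
consequents (drawn from the disjoint types `TA` and `TC`). -/
structure CES where
  A : Type
  C : Type
  M : Type
  TA : Type
  TC : Type
  satA : M → A → Prop
  satC : M → C → Prop
  tvA : A → Finset TA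
  tvC : C → Finset TC

/-- Validity of a sequent `A ⊢ C`: every model of the antecedent satisfies the consequent. -/
def CES.Valid (S : CES) (s : S.A × S.C) : Prop :=
  ∀ m : S.M, S.satA m s.1 → S.satC m s.2

/-- A cyclic pre-proof: a finite directed graph whose nodes carry sequents and
(ordered) lists of children, together with the trace pair functions `δ1` (on
antecedent trace values) and `δ2` (on consequent trace values) attached to the
rule instance at each node/premise.  `δ1`/`δ2` are partial (Option-valued) and
only defined along edges, on trace values of the respective sequents. -/
structure PreProof (S : CES) where
  Node : Type
  [fintypeNode : Fintype Node]
  [decEqNode : DecidableEq Node]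
  seqOf : Node → S.A × S.C
  children : Node → List Node
  δ1 : Node → Node → S.TA → S.TA → Option Ordl
  δ2 : Node → Node → S.TC → S.TC → Option Ordl
  δ1_dom : ∀ ν ν' τ τ', (δ1 ν ν' τ τ').isSome →
    ν' ∈ children ν ∧ τ ∈ S.tvA (seqOf ν).1 ∧ τ' ∈ S.tvA (seqOf ν').1
  δ2_dom : ∀ ν ν' τ τ', (δ2 ν ν' τ τ').isSome →
    ν' ∈ children ν ∧ τ ∈ S.tvC (seqOf ν).2 ∧ τ' ∈ S.tvC (seqOf ν').2

attribute [instance] PreProof.fintypeNode PreProof.decEqNode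

/-- An ordinal trace function: partial ordinal-valued functions on
(antecedent resp. consequent) trace value/model pairs, defined at least on all
`(τ, m)` with `τ ∈ tvA A` and `m ⊨ A`. -/
structure OTF (S : CES) where
  OA : S.TA → S.M → Option Ordl
  OC : S.TC → S.M → Option Ordl
  definedA : ∀ (a : S.A) (τ : S.TA) (m : S.M),
    τ ∈ S.tvA a → S.satA m a → (OA τ m).isSome

/-- `1̲`: the least value taken by the ordinal trace function. -/
def OTF.leastVal {S : CES} (O : OTF S) : Ordl :=
  sInf {o : Ordl | (∃ τ m, O.OA τ m = some o) ∨ (∃ τ m, O.OC τ m = some o)}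

/-- A sequent `s` equates trace values `τa` and `τc`: whenever `s` is valid,
every model of the antecedent realizing `τc` realizes `τa` with the same size. -/
def OTF.Equates {S : CES} (O : OTF S) (s : S.A × S.C) (τa : S.TA) (τc : S.TC) : Prop :=
  S.Valid s → ∀ m : S.M, S.satA m s.1 →
    ∀ o : Ordl, O.OC τc m = some o → O.OA τa m = some o

namespace PreProof

variable {S : CES}

/-- A node is axiomatic when its rule instance has no premises. -/
def Axiomatic (P : PreProof S) (ν : P.Node) : Prop := P.children ν = []

/-- `νs 0, …, νs (n-1)` is a (finite) path in the pre-proof. -/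
def IsPath (P : PreProof S) (n : ℕ) (νs : ℕ → P.Node) : Prop :=
  ∀ i, i + 1 < n → νs (i + 1) ∈ P.children (νs i)

/-- An infinite path in the pre-proof. -/
def InfPath (P : PreProof S) (νs : ℕ → P.Node) : Prop :=
  ∀ i, νs (i + 1) ∈ P.children (νs i)

/-- A left-hand trace `τs 0, …, τs (k-1)` follows (an initial segment of) the
path `νs 0, …, νs (n-1)`. -/
def FollowsL (P : PreProof S) (n : ℕ) (νs : ℕ → P.Node) (k : ℕ) (τs : ℕ → S.TA) : Prop :=
  k ≤ n ∧ (∀ i < k, τs i ∈ S.tvA (P.seqOf (νs i)).1) ∧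
    ∀ i, i + 1 < k → (P.δ1 (νs i) (νs (i + 1)) (τs i) (τs (i + 1))).isSome

/-- A right-hand trace `τs 0, …, τs (k-1)` follows (an initial segment of) the
path `νs 0, …, νs (n-1)`. -/
def FollowsR (P : PreProof S) (n : ℕ) (νs : ℕ → P.Node) (k : ℕ) (τs : ℕ → S.TC) : Prop :=
  k ≤ n ∧ (∀ i < k, τs i ∈ S.tvC (P.seqOf (νs i)).2) ∧
    ∀ i, i + 1 < k → (P.δ2 (νs i) (νs (i + 1)) (τs i) (τs (i + 1))).isSome

/-- The `δ1`-value of the `i`-th step of a left-hand trace along a path. -/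
def stepL (P : PreProof S) (νs : ℕ → P.Node) (τs : ℕ → S.TA) (i : ℕ) : Ordl :=
  (P.δ1 (νs i) (νs (i + 1)) (τs i) (τs (i + 1))).getD 0

/-- The `δ2`-value of the `i`-th step of a right-hand trace along a path. -/
def stepR (P : PreProof S) (νs : ℕ → P.Node) (τs : ℕ → S.TC) (i : ℕ) : Ordl :=
  (P.δ2 (νs i) (νs (i + 1)) (τs i) (τs (i + 1))).getD 0

/-- Size `Θ` of a left-hand trace of length `k` along a path: the *reverse*
ordinal sum `δ1(τ_{k-2},τ_{k-1}) + ⋯ + δ1(τ_0,τ_1)`. -/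
def thetaL (P : PreProof S) (νs : ℕ → P.Node) (τs : ℕ → S.TA) (k : ℕ) : Ordl :=
  revSum (P.stepL νs τs) (k - 1)

/-- Size `Θ` of a right-hand trace of length `k` along a path (reverse sum). -/
def thetaR (P : PreProof S) (νs : ℕ → P.Node) (τs : ℕ → S.TC) (k : ℕ) : Ordl :=
  revSum (P.stepR νs τs) (k - 1)

/-- The global soundness condition: every infinite path has a tail followed by
an infinitely progressing left-hand trace. -/
def GlobalSound (P : PreProof S) : Prop :=
  ∀ νs : ℕ → P.Node, P.InfPath νs →
    ∃ (k : ℕ) (τs : ℕ → S.TA),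
      (∀ i, (P.δ1 (νs (k + i)) (νs (k + i + 1)) (τs i) (τs (i + 1))).isSome) ∧
      ∀ N, ∃ i, N ≤ i ∧
        ∃ α : Ordl, P.δ1 (νs (k + i)) (νs (k + i + 1)) (τs i) (τs (i + 1)) = some α ∧ 0 < α

/-- A (valid) cyclic proof: a pre-proof satisfying the global soundness
condition; consequently (and we record it as part of the notion) all sequents
occurring in it are valid. -/
def IsCyclicProof (P : PreProof S) : Prop :=
  P.GlobalSound ∧ ∀ ν : P.Node, S.Valid (P.seqOf ν)

/-- The descending counter-model property of an ordinal trace function. -/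
def DCM (P : PreProof S) (O : OTF S) : Prop :=
  ∀ (ν : P.Node) (m : S.M),
    S.satA m (P.seqOf ν).1 → ¬ S.satC m (P.seqOf ν).2 →
    ∃ ν' ∈ P.children ν, ∃ m' : S.M,
      S.satA m' (P.seqOf ν').1 ∧ ¬ S.satC m' (P.seqOf ν').2 ∧
      ∀ (τ τ' : S.TA) (α : Ordl), P.δ1 ν ν' τ τ' = some α →
        ∀ o : Ordl, O.OA τ m = some o →
          ∃ o' : Ordl, O.OA τ' m' = some o' ∧ o' + α ≤ o

/-- A right-hand trace value is terminal for a node when it has no successor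
trace value towards any premise. -/
def TerminalR (P : PreProof S) (ν : P.Node) (σ : S.TC) : Prop :=
  ∀ ν' ∈ P.children ν, ∀ σ', P.δ2 ν ν' σ σ' = none

/-- Defining property of the exclusion predicate: a rule instance (node)
excludes a consequent trace value only if no model of the antecedent realizes
it. -/
def ExclOK (P : PreProof S) (O : OTF S) (Excl : P.Node → S.TC → Prop) : Prop :=
  ∀ (ν : P.Node) (σ : S.TC), Excl ν σ →
    ∀ m : S.M, S.satA m (P.seqOf ν).1 → O.OC σ m = none

/-- A consequent trace value is ground w.r.t. a node: if the node's sequent is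
valid then the value is realized only with the least possible size. -/
def Ground (P : PreProof S) (O : OTF S) (ν : P.Node) (σ : S.TC) : Prop :=
  S.Valid (P.seqOf ν) → ∀ m : S.M, S.satA m (P.seqOf ν).1 →
    ∀ o : Ordl, O.OC σ m = some o → o = O.leastVal

/-- The trace value ordering relation `τ2 ∼^ν_P τ1` (`∼` is `<` when
`strict = true` and `≤` otherwise). -/
def TVO (P : PreProof S) (O : OTF S) (Excl : P.Node → S.TC → Prop) (strict : Bool)
    (ν0 : P.Node) (τ1 : S.TA) (τ2 : S.TC) : Prop :=
  ∀ (n : ℕ) (νs : ℕ → P.Node) (τs : ℕ → S.TC),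
    1 ≤ n → P.IsPath n νs → νs 0 = ν0 → τs 0 = τ2 →
    P.FollowsR n νs n τs →
    P.TerminalR (νs (n - 1)) (τs (n - 1)) →
    ¬ Excl (νs (n - 1)) (τs (n - 1)) →
    ∃ (k : ℕ) (τs' : ℕ → S.TA),
      1 ≤ k ∧ k ≤ n ∧ τs' 0 = τ1 ∧ P.FollowsL n νs k τs' ∧
      (if strict then P.thetaR νs τs n < P.thetaL νs τs' k
        else P.thetaR νs τs n ≤ P.thetaL νs τs' k) ∧
      (P.Ground O (νs (n - 1)) (τs (n - 1)) ∨
        (P.Axiomatic (νs (n - 1)) ∧ k = n ∧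
          O.Equates (P.seqOf (νs (n - 1))) (τs' (n - 1)) (τs (n - 1))))

/-- The descending model property of an ordinal trace function. -/
def DMP (P : PreProof S) (O : OTF S) : Prop :=
  ∀ ν : P.Node, P.children ν ≠ [] →
    S.Valid (P.seqOf ν) → (∀ ν' ∈ P.children ν, S.Valid (P.seqOf ν')) →
    ∀ τ1 ∈ S.tvA (P.seqOf ν).1, ∀ τ2 ∈ S.tvC (P.seqOf ν).2,
    ∀ m : S.M, S.satA m (P.seqOf ν).1 →
    ∃ ν' ∈ P.children ν, ∃ m' : S.M,
      S.satA m' (P.seqOf ν').1 ∧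
      (P.TerminalR ν τ2 ∨ ∃ σ', (P.δ2 ν ν' τ2 σ').isSome) ∧
      (∀ (σ' : S.TA) (α : Ordl), P.δ1 ν ν' τ1 σ' = some α →
        ∀ o : Ordl, O.OA τ1 m = some o →
          ∃ o' : Ordl, O.OA σ' m' = some o' ∧ o' + α ≤ o) ∧
      (∀ (σ' : S.TC) (α : Ordl), P.δ2 ν ν' τ2 σ' = some α →
        ∀ o : Ordl, O.OC τ2 m = some o →
          ∃ o' : Ordl, O.OC σ' m' = some o' ∧ o ≤ o' + α)

/-- A sequence of models supports a left-hand trace along a path. -/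
def SupportsL (P : PreProof S) (O : OTF S) (n : ℕ) (νs : ℕ → P.Node) (k : ℕ)
    (τs : ℕ → S.TA) (ms : ℕ → S.M) : Prop :=
  P.FollowsL n νs k τs ∧
    (∀ i < k, S.satA (ms i) (P.seqOf (νs i)).1 ∧ (O.OA (τs i) (ms i)).isSome) ∧
    ∀ j, j + 1 < k → ∀ o o' : Ordl, O.OA (τs j) (ms j) = some o →
      O.OA (τs (j + 1)) (ms (j + 1)) = some o' →
      o' + P.stepL νs τs j ≤ o

/-- A sequence of models supports a right-hand trace along a path. -/
def SupportsR (P : PreProof S) (O : OTF S) (n : ℕ) (νs : ℕ → P.Node) (k : ℕ)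
    (τs : ℕ → S.TC) (ms : ℕ → S.M) : Prop :=
  P.FollowsR n νs k τs ∧
    (∀ i < k, S.satC (ms i) (P.seqOf (νs i)).2 ∧ (O.OC (τs i) (ms i)).isSome) ∧
    ∀ j, j + 1 < k → ∀ o o' : Ordl, O.OC (τs j) (ms j) = some o →
      O.OC (τs (j + 1)) (ms (j + 1)) = some o' →
      o ≤ o' + P.stepR νs τs j

/-- `(ν', τ')` is reachable from `(ν, τ)` on the left. -/
def ReachL (P : PreProof S) (ν : P.Node) (τ : S.TA) (ν' : P.Node) (τ' : S.TA) : Prop :=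
  ∃ (n : ℕ) (νs : ℕ → P.Node) (τs : ℕ → S.TA),
    1 ≤ n ∧ P.IsPath n νs ∧ P.FollowsL n νs n τs ∧
    νs 0 = ν ∧ τs 0 = τ ∧ νs (n - 1) = ν' ∧ τs (n - 1) = τ'

/-- `(ν', τ')` is reachable from `(ν, τ)` on the right. -/
def ReachR (P : PreProof S) (ν : P.Node) (τ : S.TC) (ν' : P.Node) (τ' : S.TC) : Prop :=
  ∃ (n : ℕ) (νs : ℕ → P.Node) (τs : ℕ → S.TC),
    1 ≤ n ∧ P.IsPath n νs ∧ P.FollowsR n νs n τs ∧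
    νs 0 = ν ∧ τs 0 = τ ∧ νs (n - 1) = ν' ∧ τs (n - 1) = τ'

/-- A left cycle along a path. -/
def IsCycleL (P : PreProof S) (n : ℕ) (νs : ℕ → P.Node) (τs : ℕ → S.TA) : Prop :=
  2 ≤ n ∧ P.IsPath n νs ∧ P.FollowsL n νs n τs ∧ νs (n - 1) = νs 0 ∧ τs (n - 1) = τs 0

/-- A right cycle along a path. -/
def IsCycleR (P : PreProof S) (n : ℕ) (νs : ℕ → P.Node) (τs : ℕ → S.TC) : Prop :=
  2 ≤ n ∧ P.IsPath n νs ∧ P.FollowsR n νs n τs ∧ νs (n - 1) = νs 0 ∧ τs (n - 1) = τs 0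

/-- A simple left cycle. -/
def IsSimpleCycleL (P : PreProof S) (n : ℕ) (νs : ℕ → P.Node) (τs : ℕ → S.TA) : Prop :=
  P.IsCycleL n νs τs ∧
    ∀ i j, 1 ≤ i → i < j → j ≤ n - 1 → ¬ (νs i = νs j ∧ τs i = τs j)

/-- A simple right cycle. -/
def IsSimpleCycleR (P : PreProof S) (n : ℕ) (νs : ℕ → P.Node) (τs : ℕ → S.TC) : Prop :=
  P.IsCycleR n νs τs ∧
    ∀ i j, 1 ≤ i → i < j → j ≤ n - 1 → ¬ (νs i = νs j ∧ τs i = τs j)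

/-- A simple left binary cycle. -/
def IsSimpleBinCycleL (P : PreProof S) (n : ℕ) (νs : ℕ → P.Node)
    (τs τs' : ℕ → S.TA) : Prop :=
  P.IsCycleL n νs τs ∧ P.IsCycleL n νs τs' ∧
    ∀ i j, 1 ≤ i → i < j → j ≤ n - 1 →
      ¬ (νs i = νs j ∧ τs i = τs j ∧ τs' i = τs' j)

/-- `P` is left finitely progressing w.r.t. `(ν0, τ0)`. -/
def FinProgL (P : PreProof S) (ν0 : P.Node) (τ0 : S.TA) : Prop :=
  ∀ (ν1 ν2 : P.Node) (τ1 τ2 : S.TA) (α : Ordl),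
    P.ReachL ν0 τ0 ν1 τ1 → P.δ1 ν1 ν2 τ1 τ2 = some α → α < Ordinal.omega0

/-- `P` is right finitely progressing w.r.t. `(ν0, τ0)`. -/
def FinProgR (P : PreProof S) (ν0 : P.Node) (τ0 : S.TC) : Prop :=
  ∀ (ν1 ν2 : P.Node) (τ1 τ2 : S.TC) (α : Ordl),
    P.ReachR ν0 τ0 ν1 τ1 → P.δ2 ν1 ν2 τ1 τ2 = some α → α < Ordinal.omega0

/-- `P` is dynamic w.r.t. `ν0`, `τA`, `τC`: every reachable left or right
simple cycle has strictly positive size. -/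
def Dynamic (P : PreProof S) (ν0 : P.Node) (τA : S.TA) (τC : S.TC) : Prop :=
  (∀ (n : ℕ) (νs : ℕ → P.Node) (τs : ℕ → S.TA), P.IsSimpleCycleL n νs τs →
    P.ReachL ν0 τA (νs 0) (τs 0) → 0 < P.thetaL νs τs n) ∧
  (∀ (n : ℕ) (νs : ℕ → P.Node) (τs : ℕ → S.TC), P.IsSimpleCycleR n νs τs →
    P.ReachR ν0 τC (νs 0) (τs 0) → 0 < P.thetaR νs τs n)

/-- `P` is balanced w.r.t. `(ν0, τA)`: the two components of every reachable
simple left binary cycle have equal size. -/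
def Balanced (P : PreProof S) (ν0 : P.Node) (τA : S.TA) : Prop :=
  ∀ (n : ℕ) (νs : ℕ → P.Node) (τs τs' : ℕ → S.TA), P.IsSimpleBinCycleL n νs τs τs' →
    P.ReachL ν0 τA (νs 0) (τs 0) → P.ReachL ν0 τA (νs 0) (τs' 0) →
    P.thetaL νs τs n = P.thetaL νs τs' n

/-- The trace width `W(P)`. -/
def traceWidth (P : PreProof S) : ℕ :=
  Finset.univ.sup fun ν : P.Node =>
    max (S.tvA (P.seqOf ν).1).card (S.tvC (P.seqOf ν).2).card

/-- The (binary left-hand) cycle threshold `C(P)`: the number of triples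
`(σ, σ', μ)` with `σ, σ' ∈ TraceVals_A(μ)`. -/
def cycThreshold (P : PreProof S) : ℕ :=
  ∑ ν : P.Node, (S.tvA (P.seqOf ν).1).card * (S.tvA (P.seqOf ν).1).card

/-- `maxStep(P)`: the maximum (finite) `δ1`-value over the edges of `P`. -/
def maxStepN (P : PreProof S) : ℕ :=
  sSup {k : ℕ | ∃ ν ν' τ τ', P.δ1 ν ν' τ τ' = some (k : Ordl)}

/-- The in-degree of the proof graph. -/
def inDeg (P : PreProof S) : ℕ :=
  Finset.univ.sup fun ν' : P.Node =>
    (Finset.univ.filter fun ν : P.Node => ν' ∈ P.children ν).card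

/-- The trace pair function of `P` is trace injective. -/
def TraceInjective (P : PreProof S) : Prop :=
  (∀ (ν ν' : P.Node) (τ τ' τ'' : S.TA),
    (P.δ1 ν ν' τ τ'').isSome → (P.δ1 ν ν' τ' τ'').isSome → τ = τ') ∧
  (∀ (ν ν' : P.Node) (σ σ' σ'' : S.TC),
    (P.δ2 ν ν' σ σ'').isSome → (P.δ2 ν ν' σ' σ'').isSome → σ = σ')

/-- `T_ν(σ)`: the set of antecedent trace values of `ν` equated to `σ`
by the sequent of `ν`. -/
def Tset (P : PreProof S) (O : OTF S) (ν : P.Node) (σ : S.TC) : Set S.TA :=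
  {τ : S.TA | τ ∈ S.tvA (P.seqOf ν).1 ∧ O.Equates (P.seqOf ν) τ σ}

end PreProof

/-! ### Weighted automata over the ordinal max-plus semiring -/

/-- The alphabet `Σ_P`. -/
abbrev Sig {S : CES} (P : PreProof S) : Type := P.Node ⊕ (Set S.TA × S.TC)

/-- States of the antecedent automata (`⊤ⁱ_μ` states are used only by the
approximate automata). -/
inductive AState (Node TA : Type) : Type
  | init : AState Node TA
  | pair : Node → TA → AState Node TA
  | bot : AState Node TA
  | top : AState Node TA
  | topn : Node → ℕ → AState Node TA

instance {Node TA : Type} : Inhabited (AState Node TA) := ⟨AState.init⟩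

/-- States of the consequent automaton. -/
inductive BState (Node TC : Type) : Type
  | init : BState Node TC
  | pair : Node → TC → BState Node TC
  | bot : BState Node TC

instance {Node TC : Type} : Inhabited (BState Node TC) := ⟨BState.init⟩

/-- Transition relation of the (full) antecedent automaton `𝒜^{(P,ν0)}_{(τ1,·)}`. -/
inductive ATrans {S : CES} (P : PreProof S) (O : OTF S) (ν0 : P.Node) (τ1 : S.TA) :
    AState P.Node S.TA → Sig P → AState P.Node S.TA → Prop
  | start : ATrans P O ν0 τ1 .init (Sum.inl ν0) (.pair ν0 τ1)
  | step {μ μ' : P.Node} {σ σ' : S.TA} (h1 : μ' ∈ P.children μ)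
      (h2 : (P.δ1 μ μ' σ σ').isSome) :
      ATrans P O ν0 τ1 (.pair μ σ) (Sum.inl μ') (.pair μ' σ')
  | toBot {μ : P.Node} {σ : S.TA} {σ' : S.TC} (h1 : P.Axiomatic μ)
      (h2 : σ' ∈ S.tvC (P.seqOf μ).2) (h3 : σ ∈ P.Tset O μ σ') :
      ATrans P O ν0 τ1 (.pair μ σ) (Sum.inr (P.Tset O μ σ', σ')) .bot
  | toTop {μ μ' : P.Node} {σ : S.TA} (h : μ' ∈ P.children μ) :
      ATrans P O ν0 τ1 (.pair μ σ) (Sum.inl μ') .top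
  | topLoop (μ : P.Node) : ATrans P O ν0 τ1 .top (Sum.inl μ) .top

/-- Transition relation of the approximate antecedent automaton `𝒜(n)^{(P,ν0)}_{(τ1,·)}`. -/
inductive ATransN {S : CES} (P : PreProof S) (O : OTF S) (n : ℕ) (ν0 : P.Node) (τ1 : S.TA) :
    AState P.Node S.TA → Sig P → AState P.Node S.TA → Prop
  | start : ATransN P O n ν0 τ1 .init (Sum.inl ν0) (.pair ν0 τ1)
  | step {μ μ' : P.Node} {σ σ' : S.TA} (h1 : μ' ∈ P.children μ)
      (h2 : (P.δ1 μ μ' σ σ').isSome) :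
      ATransN P O n ν0 τ1 (.pair μ σ) (Sum.inl μ') (.pair μ' σ')
  | toBot {μ : P.Node} {σ : S.TA} {σ' : S.TC} (h1 : P.Axiomatic μ)
      (h2 : σ' ∈ S.tvC (P.seqOf μ).2) (h3 : σ ∈ P.Tset O μ σ') :
      ATransN P O n ν0 τ1 (.pair μ σ) (Sum.inr (P.Tset O μ σ', σ')) .bot
  | toTopn {μ μ' : P.Node} {σ : S.TA} (h : μ' ∈ P.children μ) :
      ATransN P O n ν0 τ1 (.pair μ σ) (Sum.inl μ') (.topn μ' 1)
  | topnStay {μ μ' : P.Node} {i : ℕ} (h1 : 0 < i) (h2 : i ≤ n) (h3 : μ' ≠ μ) :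
      ATransN P O n ν0 τ1 (.topn μ i) (Sum.inl μ') (.topn μ i)
  | topnStep {μ : P.Node} {i : ℕ} (h1 : 0 < i) (h2 : i < n) :
      ATransN P O n ν0 τ1 (.topn μ i) (Sum.inl μ) (.topn μ (i + 1))

/-- Transition relation of the consequent automaton `ℬ^{(P,ν0)}_{(·,τ2)}`. -/
inductive BTrans {S : CES} (P : PreProof S) (O : OTF S) (Excl : P.Node → S.TC → Prop)
    (ν0 : P.Node) (τ2 : S.TC) :
    BState P.Node S.TC → Sig P → BState P.Node S.TC → Prop
  | start : BTrans P O Excl ν0 τ2 .init (Sum.inl ν0) (.pair ν0 τ2)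
  | step {μ μ' : P.Node} {σ σ' : S.TC} (h1 : μ' ∈ P.children μ)
      (h2 : (P.δ2 μ μ' σ σ').isSome) :
      BTrans P O Excl ν0 τ2 (.pair μ σ) (Sum.inl μ') (.pair μ' σ')
  | toBot {μ : P.Node} {σ : S.TC} (h1 : P.Axiomatic μ) (h2 : σ ∈ S.tvC (P.seqOf μ).2)
      (h3 : ¬ P.Ground O μ σ) (h4 : ¬ Excl μ σ) :
      BTrans P O Excl ν0 τ2 (.pair μ σ) (Sum.inr (P.Tset O μ σ, σ)) .bot

/-- Weight function of the antecedent automata (the only potentially non-zero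
weights sit on pair-to-pair transitions, where they are given by `δ1`). -/
def Awt {S : CES} (P : PreProof S) :
    AState P.Node S.TA → Sig P → AState P.Node S.TA → Ordl
  | .pair μ σ, _, .pair μ' σ' => (P.δ1 μ μ' σ σ').getD 0
  | _, _, _ => 0

/-- Weight function of the consequent automaton. -/
def Bwt {S : CES} (P : PreProof S) :
    BState P.Node S.TC → Sig P → BState P.Node S.TC → Ordl
  | .pair μ σ, _, .pair μ' σ' => (P.δ2 μ μ' σ σ').getD 0
  | _, _, _ => 0

/-- `q` is a run over the word `σ 0, …, σ (m-1)` (from the initial state `q0`). -/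
def IsRun {Q A : Type*} (T : Q → A → Q → Prop) (q0 : Q) (m : ℕ) (σ : ℕ → A)
    (q : ℕ → Q) : Prop :=
  q 0 = q0 ∧ ∀ i < m, T (q i) (σ i) (q (i + 1))

/-- The value of a run: the `⊗`-product (i.e. reverse ordinal sum) of the
weights of its transitions. -/
def runVal {Q A : Type*} (wt : Q → A → Q → Ordl) (m : ℕ) (σ : ℕ → A) (q : ℕ → Q) : Ordl :=
  revSum (fun i => wt (q i) (σ i) (q (i + 1))) m

/-- The quantitative language of a weighted automaton: `⊥` (i.e. `none`) if the
word admits no accepting run, and otherwise the supremum (maximum) of the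
values of its accepting runs. -/
def Lang {Q A : Type*} (T : Q → A → Q → Prop) (q0 : Q) (F : Q → Prop)
    (wt : Q → A → Q → Ordl) (m : ℕ) (σ : ℕ → A) : Option Ordl := by
  classical
  exact if (∃ q : ℕ → Q, IsRun T q0 m σ q ∧ F (q m)) then
    some (sSup {v : Ordl | ∃ q : ℕ → Q, IsRun T q0 m σ q ∧ F (q m) ∧ v = runVal wt m σ q})
  else none

/-- Ordering of quantitative language values, with `⊥ = none` below everything. -/
def OptLE : Option Ordl → Option Ordl → Prop
  | none, _ => True
  | some _, none => False
  | some a, some b => a ≤ b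

/-- Strict ordering of quantitative language values on defined (non-`⊥`) values. -/
def OptLT : Option Ordl → Option Ordl → Prop
  | none, _ => True
  | some _, none => False
  | some a, some b => a < b

/-- `∼` on language values: `<` when `strict`, else `≤`. -/
def OptOrd (strict : Bool) : Option Ordl → Option Ordl → Prop :=
  fun x y => if strict then OptLT x y else OptLE x y

/-- Final states of the antecedent automata: all non-initial states. -/
def AFinal {Node TA : Type} : AState Node TA → Prop := fun q => q ≠ .init

/-- Final states of the consequent automaton. -/
def BFinal {S : CES} (P : PreProof S) (O : OTF S) (Excl : P.Node → S.TC → Prop) :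
    BState P.Node S.TC → Prop
  | .init => False
  | .bot => True
  | .pair μ σ => ¬ Excl μ σ ∧
      ((¬ P.Axiomatic μ ∧ P.TerminalR μ σ) ∨ (P.Axiomatic μ ∧ P.Ground O μ σ))

/-- The quantitative language of `𝒜^{(P,ν0)}_{(τ1,τ2)}` (it does not depend on `τ2`). -/
def LangA {S : CES} (P : PreProof S) (O : OTF S) (ν0 : P.Node) (τ1 : S.TA) :
    ℕ → (ℕ → Sig P) → Option Ordl :=
  Lang (ATrans P O ν0 τ1) .init AFinal (Awt P)

/-- The quantitative language of `𝒜(n)^{(P,ν0)}_{(τ1,τ2)}`. -/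
def LangAN {S : CES} (P : PreProof S) (O : OTF S) (n : ℕ) (ν0 : P.Node) (τ1 : S.TA) :
    ℕ → (ℕ → Sig P) → Option Ordl :=
  Lang (ATransN P O n ν0 τ1) .init AFinal (Awt P)

/-- The quantitative language of `ℬ^{(P,ν0)}_{(τ1,τ2)}` (it does not depend on `τ1`). -/
def LangB {S : CES} (P : PreProof S) (O : OTF S) (Excl : P.Node → S.TC → Prop)
    (ν0 : P.Node) (τ2 : S.TC) : ℕ → (ℕ → Sig P) → Option Ordl :=
  Lang (BTrans P O Excl ν0 τ2) .init (BFinal P O Excl) (Bwt P)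

/-- The automaton `ℬ^{(P,ν0)}_{(·,τ2)}` is grounded: every reachable final pair
state carries a trace value that is ground w.r.t. its node. -/
def BGrounded {S : CES} (P : PreProof S) (O : OTF S) (Excl : P.Node → S.TC → Prop)
    (ν0 : P.Node) (τ2 : S.TC) : Prop :=
  ∀ (μ : P.Node) (σ : S.TC),
    (∃ (m : ℕ) (w : ℕ → Sig P) (q : ℕ → BState P.Node S.TC),
      IsRun (BTrans P O Excl ν0 τ2) .init m w q ∧ q m = .pair μ σ ∧
        BFinal P O Excl (.pair μ σ)) →
    P.Ground O μ σ

/-- Collapse the graded sink states of an approximate automaton onto `⊤`. -/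
def collapseTop {Node TA : Type} : AState Node TA → AState Node TA
  | .topn _ _ => .top
  | q => q

/-- The number of occurrences of the letter `a` among `σ lo, …, σ (hi - 1)`. -/
def cnt {A : Type*} (σ : ℕ → A) (a : A) (lo hi : ℕ) : ℕ := by
  classical
  exact ((Finset.Ico lo hi).filter fun t => σ t = a).card

/-- The set of runs (as lists of states) of an automaton on a word. -/
def RunsOn {Q A : Type*} [Inhabited Q] (T : Q → A → Q → Prop) (q0 : Q)
    (w : List A) : Set (List Q) :=
  {l : List Q | l.length = w.length + 1 ∧ l.getD 0 default = q0 ∧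
    ∀ i, ∀ h : i < w.length, T (l.getD i default) (w.get ⟨i, h⟩) (l.getD (i + 1) default)}

end

theorem aux_trans_ne_top {S : CES} {P : PreProof S} {O : OTF S} {ν0 : P.Node} {τ1 : S.TA}
    {a b : AState P.Node S.TA} {s : Sig P} (n : ℕ) (h : ATrans P O ν0 τ1 a s b)
    (hb : b ≠ AState.top) : ATransN P O n ν0 τ1 a s b := by
  cases h with
  | start => exact .start
  | step h1 h2 => exact .step h1 h2
  | toBot h1 h2 h3 => exact .toBot h1 h2 h3
  | toTop h => exact absurd rfl hb
  | topLoop μ => exact absurd rfl hb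

theorem aux_top_inv {S : CES} {P : PreProof S} {O : OTF S} {ν0 : P.Node} {τ1 : S.TA}
    {a b : AState P.Node S.TA} {s : Sig P} (h : ATrans P O ν0 τ1 a s b)
    (ha : a = AState.top) : b = AState.top ∧ ∃ μ, s = Sum.inl μ := by
  cases h with
  | topLoop μ => exact ⟨rfl, μ, rfl⟩
  | _ => exact absurd ha (by simp)

theorem aux_to_top {S : CES} {P : PreProof S} {O : OTF S} {ν0 : P.Node} {τ1 : S.TA}
    {a b : AState P.Node S.TA} {s : Sig P} (h : ATrans P O ν0 τ1 a s b)
    (ha : a ≠ AState.top) (hb : b = AState.top) :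
    ∃ μ μ' τ, a = .pair μ τ ∧ s = Sum.inl μ' ∧ μ' ∈ P.children μ := by
  cases h with
  | toTop h => exact ⟨_, _, _, rfl, rfl, h⟩
  | topLoop μ => exact absurd rfl ha
  | _ => exact absurd hb (by simp)

theorem aux_cnt_succ {A : Type*} (σ : ℕ → A) (a : A) (lo hi : ℕ) (h : lo ≤ hi) :
    (σ hi = a → cnt σ a lo (hi + 1) = cnt σ a lo hi + 1) ∧
    (σ hi ≠ a → cnt σ a lo (hi + 1) = cnt σ a lo hi) := by
  classical
  have e : Finset.Ico lo (hi + 1) = insert hi (Finset.Ico lo hi) := by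
    ext x; simp only [Finset.mem_Ico, Finset.mem_insert]; omega
  unfold cnt
  rw [e]
  constructor
  · intro hh
    rw [Finset.filter_insert, if_pos hh, Finset.card_insert_of_notMem (by simp)]
  · intro hh
    rw [Finset.filter_insert, if_neg hh]

theorem aux_cnt_mono {A : Type*} (σ : ℕ → A) (a : A) (lo : ℕ) {x y : ℕ} (h : x ≤ y) :
    cnt σ a lo x ≤ cnt σ a lo y := by
  classical
  unfold cnt
  exact Finset.card_le_card (Finset.filter_subset_filter _ (Finset.Ico_subset_Ico_right h))

theorem aux_cnt_self {A : Type*} (σ : ℕ → A) (a : A) (lo : ℕ) : cnt σ a lo lo = 0 := by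
  simp [cnt]

theorem aux_revSum_congr (d e : ℕ → Ordl) (m : ℕ) (h : ∀ i < m, d i = e i) :
    revSum d m = revSum e m := by
  induction m with
  | zero => rfl
  | succ k ih =>
    simp only [revSum]
    rw [h k (by omega), ih (fun i hi => h i (by omega))]

/-- **Relative Completeness of the Approximate Automata.**
Let `q` be a run of the full automaton `𝒜(ω)^{(P,ν0)}_{(τ1,·)}` over the word
`σ 0, …, σ (m-1)`.  If the run never reaches `⊤` then it is itself a run of
every approximate automaton `𝒜(n)` (`n > 0`).  Otherwise, let `i` be the
least index with `q (i+1) = ⊤`; then the letter `σ i` is (the node) `μ`, and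
for every `n` at least the number `k` of occurrences of `σ i` among
`σ i, …, σ (m-1)`, replacing each state beyond position `i` by
`⊤^{k'}_μ` — where `k'` counts the occurrences of `σ i` among
`σ i, …, σ (j-1)` — yields a run of `𝒜(n)^{(P,ν0)}_{(τ1,·)}` with the same
value. -/
theorem relative_completeness_of_approximate_automata
    (S : CES) (P : PreProof S) (O : OTF S)
    (ν0 : P.Node) (τ1 : S.TA)
    (m : ℕ) (σ : ℕ → Sig P) (q : ℕ → AState P.Node S.TA)
    (hrun : IsRun (ATrans P O ν0 τ1) AState.init m σ q) :
    ((∀ j ≤ m, q j ≠ AState.top) →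
      ∀ n : ℕ, 0 < n → IsRun (ATransN P O n ν0 τ1) AState.init m σ q) ∧
    (∀ i : ℕ, i + 1 ≤ m → q (i + 1) = AState.top → (∀ j ≤ i, q j ≠ AState.top) →
      ∃ μ : P.Node, σ i = Sum.inl μ ∧
        ∀ n : ℕ, 0 < n → cnt σ (Sum.inl μ) i m ≤ n →
          IsRun (ATransN P O n ν0 τ1) AState.init m σ
            (fun j => if j ≤ i then q j else AState.topn μ (cnt σ (Sum.inl μ) i j)) ∧
          runVal (Awt P) m σ
            (fun j => if j ≤ i then q j else AState.topn μ (cnt σ (Sum.inl μ) i j)) =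
          runVal (Awt P) m σ q) := by
  obtain ⟨h0, hstep⟩ := hrun
  refine ⟨fun hnt n _ => ⟨h0, fun j hj => aux_trans_ne_top n (hstep j hj) (hnt _ hj)⟩, ?_⟩
  intro i him hi hlt
  obtain ⟨μ0, μ, τ, hqi, hσ, hch⟩ := aux_to_top (hstep i him) (hlt i le_rfl) hi
  have htop : ∀ j, i + 1 ≤ j → j ≤ m → q j = AState.top := by
    intro j hj
    induction j, hj using Nat.le_induction with
    | base => intro _; exact hi
    | succ k hk ih => intro hkm; exact (aux_top_inv (hstep k hkm) (ih (by omega))).1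
  have c1 : cnt σ (Sum.inl μ) i (i + 1) = 1 := by
    rw [(aux_cnt_succ σ (Sum.inl μ) i i le_rfl).1 hσ, aux_cnt_self]
  refine ⟨μ, hσ, fun n hn hcn => ⟨⟨by simp [h0], ?_⟩, ?_⟩⟩
  · intro j hj
    rcases lt_trichotomy j i with hji | hji | hji
    · simp only [if_pos hji.le, if_pos (show j + 1 ≤ i from hji)]
      exact aux_trans_ne_top n (hstep j hj) (hlt _ hji)
    · subst hji
      simp only [le_refl, if_true, if_neg (show ¬ j + 1 ≤ j by omega)]
      rw [c1, hqi, hσ]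
      exact .toTopn hch
    · simp only [if_neg (show ¬ j ≤ i by omega), if_neg (show ¬ j + 1 ≤ i by omega)]
      obtain ⟨_, μ', hμ'⟩ := aux_top_inv (hstep j hj) (htop j hji hj.le)
      have hpos : 0 < cnt σ (Sum.inl μ) i j := by
        have := aux_cnt_mono σ (Sum.inl μ) i (show i + 1 ≤ j from hji)
        omega
      have hle := aux_cnt_mono σ (Sum.inl μ) i (show j + 1 ≤ m from hj)
      by_cases hc : μ' = μ
      · subst hc
        have e := (aux_cnt_succ σ (Sum.inl μ') i j hji.le).1 hμ'
        rw [e, hμ']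
        exact .topnStep hpos (by omega)
      · have e := (aux_cnt_succ σ (Sum.inl μ) i j hji.le).2 (by rw [hμ']; simpa using hc)
        rw [e, hμ']
        exact .topnStay hpos (by omega) hc
  · unfold runVal
    apply aux_revSum_congr
    intro j hj
    rcases lt_trichotomy j i with hji | hji | hji
    · simp only [if_pos hji.le, if_pos (show j + 1 ≤ i from hji)]
    · subst hji
      simp only [le_refl, if_true, if_neg (show ¬ j + 1 ≤ j by omega)]
      rw [hqi, hi]
      rfl
    · simp only [if_neg (show ¬ j ≤ i by omega), if_neg (show ¬ j + 1 ≤ i by omega)]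
      rw [htop j hji hj.le, htop (j + 1) (by omega) hj]
      rfl
end

section
/- Bounded Difference of Left-hand Trace Sizes: Let P be a cyclic proof satisfying the conditions finitely progressing, dynamic, and balanced with respect to a node ν and trace values τ ∈ TraceVals_𝒜(ν) and τ' ∈ TraceVals_𝒞(ν), and let τ⃗_{1..n} and τ⃗'_{1..n} be left-hand traces rooted at ν (i.e. with τ⃗_1 and τ⃗'_1 trace values of ν reachable from (ν,τ)) following some path ν⃗_{1..n} in P. Then |Θ_ν⃗(τ⃗) − Θ_ν⃗(τ⃗')| ≤ C(P)·maxStep(P); in particular both sizes are finite ordinals (natural numbers) and their difference is a well-defined integer bounded in absolute value by C(P)·maxStep(P). -/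
theorem bd_abstract {Q : Type} (F : Finset Q) (E : Q → Q → Prop) (w : Q → Q → ℤ) (M : ℕ)
    (Good : Q → Prop) (hGF : ∀ q, Good q → q ∈ F)
    (hGE : ∀ q r, Good q → E q r → Good r)
    (hw : ∀ q r, Good q → E q r → |w q r| ≤ M)
    (hcyc : ∀ (m : ℕ) (y : ℕ → Q), 1 ≤ m → (∀ k < m, E (y k) (y (k+1))) → y m = y 0 →
      Good (y 0) → (∀ i j, 1 ≤ i → i < j → j ≤ m → y i ≠ y j) →
      ∑ k ∈ Finset.range m, w (y k) (y (k+1)) = 0) :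
    ∀ (n : ℕ) (x : ℕ → Q), (∀ k < n, E (x k) (x (k+1))) → Good (x 0) →
      |∑ k ∈ Finset.range n, w (x k) (x (k+1))| ≤ (F.card : ℤ) * M := by
  intro n
  induction n using Nat.strong_induction_on with
  | _ n ih =>
  intro x hE hG
  have hGood : ∀ k ≤ n, Good (x k) := by
    intro k
    induction k with
    | zero => intro _; exact hG
    | succ k ihk => intro hk; exact hGE _ _ (ihk (by omega)) (hE k (by omega))
  by_cases hn : n ≤ F.card
  · calc |∑ k ∈ Finset.range n, w (x k) (x (k+1))|
        ≤ ∑ k ∈ Finset.range n, |w (x k) (x (k+1))| := Finset.abs_sum_le_sum_abs _ _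
      _ ≤ ∑ k ∈ Finset.range n, (M : ℤ) := by
          apply Finset.sum_le_sum
          intro k hk
          have hk := Finset.mem_range.1 hk
          exact hw _ _ (hGood k hk.le) (hE k hk)
      _ = (n : ℤ) * M := by simp
      _ ≤ (F.card : ℤ) * M := by gcongr
  · have hex : ∃ d i, 1 ≤ d ∧ i + d ≤ n ∧ x i = x (i + d) := by
      have := Finset.exists_ne_map_eq_of_card_lt_of_maps_to (s := Finset.range (n+1)) (t := F)
        (f := x) (by simp; omega)
        (by intro k hk; exact hGF _ (hGood k (by simp at hk; omega)))
      obtain ⟨a, ha, b, hb, hab, he⟩ := this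
      simp at ha hb
      rcases lt_or_gt_of_ne hab with h | h
      · exact ⟨b - a, a, by omega, by omega, by rw [he]; congr 1; omega⟩
      · exact ⟨a - b, b, by omega, by omega, by rw [← he]; congr 1; omega⟩
    classical
    obtain ⟨i, hd1, hid, hxe⟩ := Nat.find_spec hex
    have hmin := fun d (h : d < Nat.find hex) => Nat.find_min hex h
    generalize Nat.find hex = d at *
    have hz := hcyc d (fun k => x (i + k)) hd1 (fun k hk => hE (i + k) (by omega))
      hxe.symm (hGood i (by omega)) (by
        intro a b ha hab hb he
        apply hmin (b - a) (by omega)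
        refine ⟨i + a, by omega, by omega, ?_⟩
        rw [show i + a + (b - a) = i + b by omega]; exact he)
    obtain ⟨r, rfl⟩ : ∃ r, n = i + d + r := ⟨n - (i + d), by omega⟩
    have hlow : ∀ k, k ≤ i → (fun k => if k ≤ i then x k else x (k + d)) k = x k := by
      intro k hk; simp [hk]
    have hhigh : ∀ k, i ≤ k → (fun k => if k ≤ i then x k else x (k + d)) k = x (k + d) := by
      intro k hk
      by_cases h : k ≤ i
      · have : k = i := by omega
        subst this; simp [hxe]
      · simp [h]
    generalize (fun k => if k ≤ i then x k else x (k + d)) = z at hlow hhigh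
    have hih := ih (i + r) (by omega) z (by
      intro k hk
      by_cases h : k < i
      · rw [hlow k (by omega), hlow (k+1) (by omega)]; exact hE k (by omega)
      · rw [hhigh k (by omega), hhigh (k+1) (by omega)]
        have := hE (k + d) (by omega)
        rwa [show k + d + 1 = k + 1 + d by omega] at this) (by rw [hlow 0 (by omega)]; exact hG)
    rw [Finset.sum_range_add] at hih
    rw [Finset.sum_range_add, Finset.sum_range_add]
    have e1 : ∑ k ∈ Finset.range i, w (z k) (z (k+1)) = ∑ k ∈ Finset.range i, w (x k) (x (k+1)) := by
      apply Finset.sum_congr rfl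
      intro k hk
      have hk := Finset.mem_range.1 hk
      rw [hlow k (by omega), hlow (k+1) (by omega)]
    have e2 : ∑ k ∈ Finset.range r, w (z (i + k)) (z (i + k+1))
        = ∑ k ∈ Finset.range r, w (x (i + d + k)) (x (i + d + k+1)) := by
      apply Finset.sum_congr rfl
      intro k hk
      rw [hhigh (i + k) (by omega), hhigh (i + k+1) (by omega),
        show i + k + d = i + d + k by omega, show i + k + 1 + d = i + d + k + 1 by omega]
    have e3 : ∑ k ∈ Finset.range d, w (x (i + k)) (x (i + k+1)) = 0 := hz
    rw [e1, e2] at hih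
    rw [e3, add_zero]
    exact hih

theorem bd_revSum (d : ℕ → Ordl) (f : ℕ → ℕ) (n : ℕ) (h : ∀ k < n, d k = (f k : Ordl)) :
    revSum d n = ((∑ k ∈ Finset.range n, f k : ℕ) : Ordl) := by
  induction n with
  | zero => simp [revSum]
  | succ n ih =>
    rw [revSum, ih (fun k hk => h k (by omega)), h n (by omega), Finset.sum_range_succ, add_comm (∑ k ∈ Finset.range n, f k)]
    push_cast
    rfl

theorem bd_reach {S : CES} (P : PreProof S) {ν : P.Node} {τ : S.TA} {a b : P.Node} {s t : S.TA}
    (h : P.ReachL ν τ a s) (hs : (P.δ1 a b s t).isSome) : P.ReachL ν τ b t := by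
  obtain ⟨n, νs, τs, hn, hp, ⟨_, hf1, hf2⟩, h0, h0', h1, h1'⟩ := h
  obtain ⟨hc, hsm, htm⟩ := P.δ1_dom _ _ _ _ hs
  refine ⟨n + 1, fun k => if k < n then νs k else b, fun k => if k < n then τs k else t,
    by omega, ?_, ⟨le_rfl, ?_, ?_⟩, ?_, ?_, ?_, ?_⟩
  · intro i hi
    by_cases h : i + 1 < n
    · simp only [h, if_true, show i < n by omega]; exact hp i h
    · have : i = n - 1 := by omega
      subst this
      simp only [h, if_false, show n - 1 < n by omega, if_true, h1]; exact hc
  · intro i hi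
    by_cases h : i < n
    · simp only [h, if_true]; exact hf1 i h
    · simp only [h, if_false]; exact htm
  · intro i hi
    by_cases h : i + 1 < n
    · simp only [h, if_true, show i < n by omega]; exact hf2 i h
    · have : i = n - 1 := by omega
      subst this
      simp only [h, if_false, show n - 1 < n by omega, if_true, h1, h1']; exact hs
  · simp [show 0 < n by omega, h0]
  · simp [show 0 < n by omega, h0']
  · simp
  · simp

theorem bd_reach_mem {S : CES} (P : PreProof S) {ν : P.Node} {τ : S.TA} {a : P.Node} {s : S.TA}
    (h : P.ReachL ν τ a s) : s ∈ S.tvA (P.seqOf a).1 := by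
  obtain ⟨n, νs, τs, hn, hp, ⟨_, hf1, hf2⟩, h0, h0', rfl, rfl⟩ := h
  exact hf1 _ (by omega)

theorem bd_bdd {S : CES} (P : PreProof S) :
    BddAbove {k : ℕ | ∃ ν ν' τ τ', P.δ1 ν ν' τ τ' = some (k : Ordl)} := by
  classical
  apply Set.Finite.bddAbove
  let D : Finset (P.Node × P.Node × S.TA × S.TA) :=
    Finset.univ.biUnion fun a : P.Node => Finset.univ.biUnion fun b : P.Node =>
      ((S.tvA (P.seqOf a).1) ×ˢ (S.tvA (P.seqOf b).1)).image fun p => (a, b, p.1, p.2)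
  refine Set.Finite.subset (D.finite_toSet.biUnion
    (t := fun q => {k : ℕ | P.δ1 q.1 q.2.1 q.2.2.1 q.2.2.2 = some (k : Ordl)}) ?_) ?_
  · intro q _
    apply Set.Subsingleton.finite
    intro k hk l hl
    simp only [Set.mem_ofPred_eq] at hk hl
    rw [hk] at hl
    simpa using hl
  · rintro k ⟨a, b, s, t, h⟩
    obtain ⟨-, h1, h2⟩ := P.δ1_dom a b s t (by simp [h])
    simp only [Set.mem_iUnion]
    exact ⟨(a, b, s, t), by simp [D, h1, h2], h⟩

/-- **Bounded Difference of Left-hand Trace Sizes.**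
Let the cyclic proof `P` be finitely progressing, dynamic and balanced with
respect to `ν`, `τ ∈ TraceVals_𝒜(ν)` and `τ' ∈ TraceVals_𝒞(ν)`, and let
`τs`, `τs'` be left-hand traces of length `n` rooted at `ν` (their initial
values being reachable from `(ν, τ)`) following a path `νs` in `P`.  Then
both trace sizes are finite ordinals (natural numbers `a`, `b`) and
`|a - b| ≤ C(P)·maxStep(P)`. -/
theorem bounded_difference_of_lefthand_trace_sizes
    (S : CES) (P : PreProof S) (O : OTF S)
    (hproof : P.IsCyclicProof)
    (ν : P.Node) (τ : S.TA) (τ' : S.TC)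
    (hτ : τ ∈ S.tvA (P.seqOf ν).1) (hτ' : τ' ∈ S.tvC (P.seqOf ν).2)
    (hfpL : P.FinProgL ν τ) (hfpR : P.FinProgR ν τ')
    (hdyn : P.Dynamic ν τ τ') (hbal : P.Balanced ν τ)
    (n : ℕ) (hn : 1 ≤ n) (νs : ℕ → P.Node) (hpath : P.IsPath n νs) (hroot : νs 0 = ν)
    (τs τs' : ℕ → S.TA)
    (hf : P.FollowsL n νs n τs) (hf' : P.FollowsL n νs n τs')
    (hr : P.ReachL ν τ (νs 0) (τs 0)) (hr' : P.ReachL ν τ (νs 0) (τs' 0)) :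
    ∃ a b : ℕ, P.thetaL νs τs n = (a : Ordl) ∧ P.thetaL νs τs' n = (b : Ordl) ∧
      ((a : ℤ) - (b : ℤ)).natAbs ≤ P.cycThreshold * P.maxStepN := by
  classical
  let F : Finset (P.Node × S.TA × S.TA) :=
    (Finset.univ : Finset P.Node).biUnion fun a =>
      ((S.tvA (P.seqOf a).1) ×ˢ (S.tvA (P.seqOf a).1)).image fun p => (a, p)
  have hF : F.card ≤ P.cycThreshold := by
    refine Finset.card_biUnion_le.trans ?_
    apply Finset.sum_le_sum
    intro a _
    exact Finset.card_image_le.trans (by rw [Finset.card_product])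
  let N : Ordl → ℕ := fun o => if h : ∃ k : ℕ, o = (k : Ordl) then h.choose else 0
  have hN : ∀ o : Ordl, o < Ordinal.omega0 → o = (N o : Ordl) := by
    intro o ho
    have h : ∃ k : ℕ, o = (k : Ordl) := Ordinal.lt_omega0.1 ho
    simp only [N, h, dif_pos]
    exact h.choose_spec
  let f : P.Node → P.Node → S.TA → S.TA → ℕ := fun a b s t => N ((P.δ1 a b s t).getD 0)
  have hfs : ∀ a b s t, P.ReachL ν τ a s → (P.δ1 a b s t).isSome →
      (P.δ1 a b s t).getD 0 = (f a b s t : Ordl) ∧ f a b s t ≤ P.maxStepN := by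
    intro a b s t hrch hs
    obtain ⟨α, hα⟩ := Option.isSome_iff_exists.1 hs
    have h1 : (P.δ1 a b s t).getD 0 = (f a b s t : Ordl) := by
      apply hN
      rw [hα]
      exact hfpL a b s t α hrch hα
    refine ⟨h1, le_csSup (bd_bdd P) ⟨a, b, s, t, ?_⟩⟩
    rw [← h1, hα]; rfl
  let E : (P.Node × S.TA × S.TA) → (P.Node × S.TA × S.TA) → Prop := fun q r =>
    (P.δ1 q.1 r.1 q.2.1 r.2.1).isSome ∧ (P.δ1 q.1 r.1 q.2.2 r.2.2).isSome
  let w : (P.Node × S.TA × S.TA) → (P.Node × S.TA × S.TA) → ℤ := fun q r =>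
    (f q.1 r.1 q.2.1 r.2.1 : ℤ) - f q.1 r.1 q.2.2 r.2.2
  let Good : (P.Node × S.TA × S.TA) → Prop := fun q =>
    P.ReachL ν τ q.1 q.2.1 ∧ P.ReachL ν τ q.1 q.2.2
  have hGE : ∀ q r, Good q → E q r → Good r := fun q r hg he =>
    ⟨bd_reach P hg.1 he.1, bd_reach P hg.2 he.2⟩
  have hwalk : ∀ (m : ℕ) (y : ℕ → P.Node × S.TA × S.TA), (∀ k < m, E (y k) (y (k+1))) →
      Good (y 0) → ∀ k ≤ m, Good (y k) := by
    intro m y hE hG k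
    induction k with
    | zero => intro _; exact hG
    | succ k ihk => intro hk; exact hGE _ _ (ihk (by omega)) (hE k (by omega))
  have hth : ∀ (m : ℕ) (y : ℕ → P.Node × S.TA × S.TA), (∀ k < m, E (y k) (y (k+1))) →
      Good (y 0) →
      P.thetaL (fun k => (y k).1) (fun k => (y k).2.1) (m + 1) =
        ((∑ k ∈ Finset.range m, f (y k).1 (y (k+1)).1 (y k).2.1 (y (k+1)).2.1 : ℕ) : Ordl) ∧
      P.thetaL (fun k => (y k).1) (fun k => (y k).2.2) (m + 1) =
        ((∑ k ∈ Finset.range m, f (y k).1 (y (k+1)).1 (y k).2.2 (y (k+1)).2.2 : ℕ) : Ordl) := by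
    intro m y hE hG
    constructor
    · exact bd_revSum _ _ _ fun k hk => (hfs _ _ _ _ (hwalk m y hE hG k hk.le).1 (hE k hk).1).1
    · exact bd_revSum _ _ _ fun k hk => (hfs _ _ _ _ (hwalk m y hE hG k hk.le).2 (hE k hk).2).1
  have key := bd_abstract F E w P.maxStepN Good
    (by
      rintro ⟨a, s, t⟩ hg
      have h1 := bd_reach_mem P hg.1
      have h2 := bd_reach_mem P hg.2
      simp only at h1 h2
      simp [F, h1, h2])
    hGE
    (by
      intro q r hg he
      have h1 := (hfs _ _ _ _ hg.1 he.1).2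
      have h2 := (hfs _ _ _ _ hg.2 he.2).2
      simp only [w]
      rw [abs_le]
      constructor <;> omega)
    (by
      intro m y hm hE hclose hG hsimp
      have hg := hwalk m y hE hG
      obtain ⟨t1, t2⟩ := hth m y hE hG
      have hpathy : P.IsPath (m + 1) (fun k => (y k).1) := fun i hi =>
        (P.δ1_dom _ _ _ _ (hE i (by omega)).1).1
      have hb := hbal (m + 1) (fun k => (y k).1) (fun k => (y k).2.1) (fun k => (y k).2.2)
        ⟨⟨by omega, hpathy, ⟨le_rfl, fun i hi => bd_reach_mem P (hg i (by omega)).1,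
            fun i hi => (hE i (by omega)).1⟩, by simp [hclose], by simp [hclose]⟩,
          ⟨by omega, hpathy, ⟨le_rfl, fun i hi => bd_reach_mem P (hg i (by omega)).2,
            fun i hi => (hE i (by omega)).2⟩, by simp [hclose], by simp [hclose]⟩,
          fun i j hi hij hj he => hsimp i j hi hij (by omega)
            (Prod.ext he.1 (Prod.ext he.2.1 he.2.2))⟩ hG.1 hG.2
      rw [t1, t2] at hb
      have hb' := Nat.cast_injective hb
      simp only [w, Finset.sum_sub_distrib]
      rw [sub_eq_zero]
      exact_mod_cast hb')
  obtain ⟨m, rfl⟩ : ∃ m, n = m + 1 := ⟨n - 1, by omega⟩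
  have hE : ∀ k < m, E ((fun k => (νs k, τs k, τs' k)) k) ((fun k => (νs k, τs k, τs' k)) (k+1)) :=
    fun k hk => ⟨hf.2.2 k (by omega), hf'.2.2 k (by omega)⟩
  have hG : Good ((fun k => (νs k, τs k, τs' k)) 0) := ⟨hr, hr'⟩
  obtain ⟨t1, t2⟩ := hth m _ hE hG
  refine ⟨_, _, t1, t2, ?_⟩
  have hk := key m _ hE hG
  simp only [w, Finset.sum_sub_distrib] at hk
  have h2 : F.card * P.maxStepN ≤ P.cycThreshold * P.maxStepN := Nat.mul_le_mul_right _ hF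
  refine le_trans ?_ h2
  zify
  exact hk
end
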